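/- For every j ∈ {1, 2, 3, 4} and every monomial α such that c_{jn} s_n + α ∈ ⟨P⟩, if the variable f_n divides α then α = b_{jn}^{2^(2^n)} c_{jn} f_n. -/

import Mathlib

open MvPolynomial

/-- Monomials in the variables `σ`, represented by their exponent vectors. -/
abbrev Mon (σ : Type*) := σ →₀ ℕ

/-- A monomial order: a total order on monomials such that `1 ≼ t` for every monomial `t`
and `t ≼ u → t·v ≼ u·v` (written additively on exponent vectors). -/
structure MonOrd (σ : Type*) where
  le : Mon σ → Mon σ → Prop
  le_refl : ∀ t, le t t
  le_trans : ∀ t u v, le t u → le u v → le t v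
  le_antisymm : ∀ t u, le t u → le u t → t = u
  le_total : ∀ t u, le t u ∨ le u t
  zero_le : ∀ t, le 0 t
  add_le_add : ∀ t u v, le t u → le (t + v) (u + v)

/-- Strict version of a monomial order. -/
def MonOrd.lt {σ : Type*} (μ : MonOrd σ) (t u : Mon σ) : Prop := μ.le t u ∧ t ≠ u

/-- The extension of a monomial order (given by the relation `r` on monomials) to polynomials:
`g ≼ f` iff `g = f` or the greatest monomial on which `f` and `g` differ occurs in `f`.
(This is the closed form of the recursive definition: `g ≼ f` iff `g = f`, or
`HT g ≺ HT f`, or `HT g = HT f` and `g - HT g ≼ f - HT f`, with `0` the least polynomial.) -/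
def polyLe {σ : Type*} (r : Mon σ → Mon σ → Prop) (g f : MvPolynomial σ (ZMod 2)) : Prop :=
  g = f ∨ ∃ t, t ∈ f.support ∧ t ∉ g.support ∧
    ∀ u : Mon σ, ((u ∈ f.support ∧ u ∉ g.support) ∨ (u ∈ g.support ∧ u ∉ f.support)) → r u t

/-- Strict extension of a monomial order to polynomials. -/
def polyLt {σ : Type*} (r : Mon σ → Mon σ → Prop) (g f : MvPolynomial σ (ZMod 2)) : Prop :=
  polyLe r g f ∧ g ≠ f

/-- `S_F`: the set of non-residual polynomials with respect to `F` and the monomial order `r`,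
i.e. those `f` admitting a `g` with `f + g ∈ ⟨F⟩` and `g ≺ f`. -/
def SF {σ : Type*} (r : Mon σ → Mon σ → Prop) (F : Set (MvPolynomial σ (ZMod 2))) :
    Set (MvPolynomial σ (ZMod 2)) :=
  {f | ∃ g, f + g ∈ Ideal.span F ∧ polyLt r g f}

/-- `t` is the head monomial (`r`-greatest monomial) of the polynomial `f`. -/
def IsHT {σ : Type*} (r : Mon σ → Mon σ → Prop) (f : MvPolynomial σ (ZMod 2)) (t : Mon σ) :
    Prop :=
  t ∈ f.support ∧ ∀ u ∈ f.support, r u t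

/-- `HT(S)`: the set of head monomials (as polynomials) of the nonzero elements of `S`. -/
def HTset {σ : Type*} (r : Mon σ → Mon σ → Prop) (S : Set (MvPolynomial σ (ZMod 2))) :
    Set (MvPolynomial σ (ZMod 2)) :=
  {p | ∃ f ∈ S, f ≠ 0 ∧ ∃ t, IsHT r f t ∧ p = monomial t 1}

/-- The divisibility (componentwise) order `◁` on monomials. -/
def triMon {σ : Type*} (t u : Mon σ) : Prop := ∀ x, t x ≤ u x

/-- The order `◁` on polynomials: `p ◁ q` iff there is an injective map `φ` from the
monomials of `p` to the monomials of `q` with `t ◁ φ t` for each monomial `t` of `p`. -/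
def triPoly {σ : Type*} (p q : MvPolynomial σ (ZMod 2)) : Prop :=
  ∃ φ : Mon σ → Mon σ, Set.InjOn φ ↑p.support ∧ ∀ t ∈ p.support, φ t ∈ q.support ∧ triMon t (φ t)

/-- Upward closure with respect to `◁`. -/
def upClo {σ : Type*} (A : Set (MvPolynomial σ (ZMod 2))) : Set (MvPolynomial σ (ZMod 2)) :=
  {q | ∃ p ∈ A, triPoly p q}

/-- `Min_◁(A)`: the `◁`-minimal elements of `A`. -/
def minTri {σ : Type*} (A : Set (MvPolynomial σ (ZMod 2))) : Set (MvPolynomial σ (ZMod 2)) :=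
  {p | p ∈ A ∧ ∀ q ∈ A, triPoly q p → q = p}

/-- `G` is a Gröbner basis of the ideal `I` with respect to the monomial order `r`. -/
def IsGB {σ : Type*} (r : Mon σ → Mon σ → Prop) (G : Finset (MvPolynomial σ (ZMod 2)))
    (I : Ideal (MvPolynomial σ (ZMod 2))) : Prop :=
  (↑G : Set (MvPolynomial σ (ZMod 2))) ⊆ ↑I ∧
    Ideal.span (↑G : Set (MvPolynomial σ (ZMod 2))) = I ∧
    Ideal.span (HTset r (↑I : Set (MvPolynomial σ (ZMod 2)))) = Ideal.span (HTset r ↑G)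

/-- `G` is a reduced Gröbner basis of `I` with respect to `r`. -/
def IsReducedGB {σ : Type*} (r : Mon σ → Mon σ → Prop) (G : Finset (MvPolynomial σ (ZMod 2)))
    (I : Ideal (MvPolynomial σ (ZMod 2))) : Prop :=
  IsGB r G I ∧ ∀ f ∈ G, ¬ ∀ t ∈ f.support,
    (monomial t 1 : MvPolynomial σ (ZMod 2)) ∈
      Ideal.span (HTset r ((↑G : Set (MvPolynomial σ (ZMod 2))) \ {f}))

/-- The variable set `X`: the special variables `s, ℓ, c, c̄, b, b̄` together with, for each
`0 ≤ i ≤ n`, the variables `s_i, f_i, q_{ji}, c_{ji}, b_{ji}` (`1 ≤ j ≤ 4`, encoded by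
`j : Fin 4`) and their barred copies (`bar = true`). -/
inductive MVar (n : ℕ) : Type where
  | vs | vl | vc | vcb | vb | vbb
  | vS (bar : Bool) (i : Fin (n+1))
  | vF (bar : Bool) (i : Fin (n+1))
  | vQ (bar : Bool) (j : Fin 4) (i : Fin (n+1))
  | vC (bar : Bool) (j : Fin 4) (i : Fin (n+1))
  | vB (bar : Bool) (j : Fin 4) (i : Fin (n+1))
deriving DecidableEq

open MVar

abbrev MPoly (n : ℕ) := MvPolynomial (MVar n) (ZMod 2)

/-- `e(n) = 2^(2^n)`. -/
def en (n : ℕ) : ℕ := 2 ^ 2 ^ n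

/-- The set `P_0` (barred copy if `bar = true`). -/
def P0 (n : ℕ) (bar : Bool) : Set (MPoly n) :=
  {p | ∃ j : Fin 4, p =
    X (vB bar j 0) ^ 2 * X (vC bar j 0) * X (vF bar 0) + X (vC bar j 0) * X (vS bar 0)}

/-- The set `P_m` for `m = i+1`, `i : Fin n` (barred copy if `bar = true`).
Here `i.succ` plays the role of `m` and `i.castSucc` the role of `m-1`; the indices
`1,2,3,4` of the paper are encoded as `0,1,2,3 : Fin 4`. -/
def Pm (n : ℕ) (bar : Bool) (i : Fin n) : Set (MPoly n) :=
  ({ X (vQ bar 0 i.succ) * X (vC bar 0 i.castSucc) * X (vS bar i.castSucc) + X (vS bar i.succ),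
    X (vQ bar 1 i.succ) * X (vC bar 1 i.castSucc) * X (vS bar i.castSucc)
      + X (vQ bar 0 i.succ) * X (vB bar 0 i.castSucc) * X (vC bar 0 i.castSucc)
        * X (vF bar i.castSucc),
    X (vQ bar 2 i.succ) * X (vC bar 2 i.castSucc) * X (vF bar i.castSucc)
      + X (vQ bar 1 i.succ) * X (vC bar 1 i.castSucc) * X (vF bar i.castSucc),
    X (vQ bar 2 i.succ) * X (vB bar 0 i.castSucc) * X (vC bar 2 i.castSucc)
        * X (vS bar i.castSucc)
      + X (vQ bar 1 i.succ) * X (vB bar 3 i.castSucc) * X (vC bar 1 i.castSucc)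
        * X (vS bar i.castSucc),
    X (vQ bar 3 i.succ) * X (vB bar 3 i.castSucc) * X (vC bar 3 i.castSucc)
        * X (vF bar i.castSucc)
      + X (vQ bar 2 i.succ) * X (vC bar 2 i.castSucc) * X (vS bar i.castSucc),
    X (vQ bar 3 i.succ) * X (vC bar 3 i.castSucc) * X (vS bar i.castSucc)
      + X (vF bar i.succ) } : Set (MPoly n))
  ∪ {p | ∃ j : Fin 4, p =
      X (vQ bar 1 i.succ) * X (vB bar 2 i.castSucc) * X (vB bar j i.succ) * X (vC bar j i.succ)
          * X (vF bar i.castSucc)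
        + X (vQ bar 1 i.succ) * X (vB bar 1 i.castSucc) * X (vC bar j i.succ)
          * X (vF bar i.castSucc)}

/-- The set `P = P_0 ∪ P_1 ∪ ⋯ ∪ P_n`; for `bar = true` this is the barred copy `P̄`
(the image of `P` under the substitution replacing each variable by its barred version). -/
def PP (n : ℕ) (bar : Bool) : Set (MPoly n) := P0 n bar ∪ ⋃ i : Fin n, Pm n bar i

/-- The set `G` of seven extra binomials. -/
def GG (n : ℕ) : Set (MPoly n) :=
  { X (vB false 3 (Fin.last n)) * X vl * X vb + X vl * X vc,
    X (vB false 3 (Fin.last n)) * X vl * X vbb + X vl * X vcb,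
    X (vC false 3 (Fin.last n)) * X (vF false (Fin.last n)) + X vl,
    X (vC true 3 (Fin.last n)) * X (vF true (Fin.last n))
      + X (vC false 3 (Fin.last n)) * X (vS false (Fin.last n)),
    X (vB true 3 (Fin.last n)) * X (vC false 3 (Fin.last n)) * X (vS false (Fin.last n))
      + X (vC false 3 (Fin.last n)) * X (vS false (Fin.last n)) * X vb,
    X (vB true 3 (Fin.last n)) * X (vC false 3 (Fin.last n)) * X (vS false (Fin.last n))
      + X (vC false 3 (Fin.last n)) * X (vS false (Fin.last n)) * X vbb,
    X (vC true 3 (Fin.last n)) * X (vS true (Fin.last n)) + X vs }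

/-- The set `𝓕 = P ∪ P̄ ∪ G`. -/
def FF (n : ℕ) : Set (MPoly n) := PP n false ∪ PP n true ∪ GG n

/-- The set `C = {ℓ c̄^{m1} c^{m2} : m1 + m2 = e(n)}` of monomials. -/
def Cmon (n : ℕ) : Set (Mon (MVar n)) :=
  {α | ∃ m1 m2 : ℕ, m1 + m2 = en n ∧
    α = Finsupp.single vl 1 + Finsupp.single vcb m1 + Finsupp.single vc m2}

/-- The set `D = {ℓ^j c̄^{m1} c^{m2} : j ∈ {0,1}, j + m1 + m2 ≤ e(n)}` of monomials. -/
def Dmon (n : ℕ) : Set (Mon (MVar n)) :=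
  {α | ∃ j m1 m2 : ℕ, j ≤ 1 ∧ j + m1 + m2 ≤ en n ∧
    α = Finsupp.single vl j + Finsupp.single vcb m1 + Finsupp.single vc m2}

/-- An injective rank function on the variables realizing the variable ordering
(from least to greatest): `s, c, c̄, ℓ, b, b̄`; then `s_0,…,s_n`; `f_0,…,f_n`;
`c_{10},…,c_{1n}; …; c_{40},…,c_{4n}`; `b_{10},…,b_{4n}`; `q_{10},…,q_{4n}`;
then the barred variables in the same pattern. -/
def vrank (n : ℕ) : MVar n → ℕ
  | .vs => 0
  | .vc => 1
  | .vcb => 2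
  | .vl => 3
  | .vb => 4
  | .vbb => 5
  | .vS bar i => 6 + (cond bar (14 * (n+1)) 0) + (i : ℕ)
  | .vF bar i => 6 + (cond bar (14 * (n+1)) 0) + (n+1) + (i : ℕ)
  | .vC bar j i => 6 + (cond bar (14 * (n+1)) 0) + 2*(n+1) + (j : ℕ)*(n+1) + (i : ℕ)
  | .vB bar j i => 6 + (cond bar (14 * (n+1)) 0) + 6*(n+1) + (j : ℕ)*(n+1) + (i : ℕ)
  | .vQ bar j i => 6 + (cond bar (14 * (n+1)) 0) + 10*(n+1) + (j : ℕ)*(n+1) + (i : ℕ)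

/-- The lexicographic monomial order on `X`: `t ≼_lex u` iff `t = u` or the exponents differ
somewhere and at the greatest variable (w.r.t. `vrank`) where they differ, the exponent of
`t` is smaller. -/
def lexLe (n : ℕ) (t u : Mon (MVar n)) : Prop :=
  t = u ∨ ∃ x : MVar n, t x < u x ∧ ∀ y : MVar n, vrank n x < vrank n y → t y = u y

/-- The total degree of a monomial. -/
def mdeg {σ : Type*} (t : Mon σ) : ℕ := t.sum fun _ k => k

/-- The degree lexicographic monomial order. -/
def degLexLe (n : ℕ) (t u : Mon (MVar n)) : Prop :=
  mdeg t < mdeg u ∨ (mdeg t = mdeg u ∧ lexLe n t u)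

/-- Weighted degree of a monomial with respect to a weight map `w`. -/
noncomputable def wdeg {n : ℕ} (w : MVar n → ℝ) (t : Mon (MVar n)) : ℝ :=
  t.sum fun x k => (k : ℝ) * w x

/-- The weighted monomial order determined by the weight map `w`. -/
def wLe {n : ℕ} (w : MVar n → ℝ) (t u : Mon (MVar n)) : Prop := t = u ∨ wdeg w t < wdeg w u


set_option linter.unusedSimpArgs false

namespace MM

/-- Variables with levels in `ℕ`; all irrelevant variables are of the form `O`. -/
inductive V (τ : Type) : Type where
  | O (x : τ)
  | S (i : ℕ)
  | F (i : ℕ)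
  | Q (j : Fin 4) (i : ℕ)
  | C (j : Fin 4) (i : ℕ)
  | B (j : Fin 4) (i : ℕ)

variable {τ : Type}

/-- The level of a variable. -/
def lev : V τ → ℕ
  | .O _ => 0
  | .S i => i
  | .F i => i
  | .Q _ i => i
  | .C _ i => i
  | .B _ i => i

noncomputable def s (τ : Type) (m : ℕ) : V τ →₀ ℕ := Finsupp.single (V.S m) 1
noncomputable def f (τ : Type) (m : ℕ) : V τ →₀ ℕ := Finsupp.single (V.F m) 1
noncomputable def q (τ : Type) (j : Fin 4) (m : ℕ) : V τ →₀ ℕ := Finsupp.single (V.Q j m) 1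
noncomputable def c (τ : Type) (j : Fin 4) (m : ℕ) : V τ →₀ ℕ := Finsupp.single (V.C j m) 1
noncomputable def b (τ : Type) (j : Fin 4) (m : ℕ) : V τ →₀ ℕ := Finsupp.single (V.B j m) 1

open Classical in
theorem s_apply (m : ℕ) (y : V τ) : s τ m y = if V.S m = y then 1 else 0 := by
  simp only [s, Finsupp.single_apply]
open Classical in
theorem f_apply (m : ℕ) (y : V τ) : f τ m y = if V.F m = y then 1 else 0 := by
  simp only [f, Finsupp.single_apply]
open Classical in
theorem q_apply (j : Fin 4) (m : ℕ) (y : V τ) : q τ j m y = if V.Q j m = y then 1 else 0 := by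
  simp only [q, Finsupp.single_apply]
open Classical in
theorem c_apply (j : Fin 4) (m : ℕ) (y : V τ) : c τ j m y = if V.C j m = y then 1 else 0 := by
  simp only [c, Finsupp.single_apply]
open Classical in
theorem b_apply (j : Fin 4) (m : ℕ) (y : V τ) : b τ j m y = if V.B j m = y then 1 else 0 := by
  simp only [b, Finsupp.single_apply]

/-- The rewriting moves, with their levels. -/
inductive Mv (τ : Type) : ℕ → (V τ →₀ ℕ) → (V τ →₀ ℕ) → Prop
  | zero (i : Fin 4) : Mv τ 0 (2 • b τ i 0 + c τ i 0 + f τ 0) (c τ i 0 + s τ 0)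
  | p1 (m : ℕ) : Mv τ (m+1) (q τ 0 (m+1) + c τ 0 m + s τ m) (s τ (m+1))
  | p2 (m : ℕ) : Mv τ (m+1) (q τ 1 (m+1) + c τ 1 m + s τ m)
      (q τ 0 (m+1) + b τ 0 m + c τ 0 m + f τ m)
  | p3 (m : ℕ) : Mv τ (m+1) (q τ 2 (m+1) + c τ 2 m + f τ m) (q τ 1 (m+1) + c τ 1 m + f τ m)
  | p4 (m : ℕ) : Mv τ (m+1) (q τ 2 (m+1) + b τ 0 m + c τ 2 m + s τ m)
      (q τ 1 (m+1) + b τ 3 m + c τ 1 m + s τ m)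
  | p5 (m : ℕ) : Mv τ (m+1) (q τ 3 (m+1) + b τ 3 m + c τ 3 m + f τ m)
      (q τ 2 (m+1) + c τ 2 m + s τ m)
  | p6 (m : ℕ) : Mv τ (m+1) (q τ 3 (m+1) + c τ 3 m + s τ m) (f τ (m+1))
  | p7 (m : ℕ) (i : Fin 4) :
      Mv τ (m+1) (q τ 1 (m+1) + b τ 2 m + b τ i (m+1) + c τ i (m+1) + f τ m)
        (q τ 1 (m+1) + b τ 1 m + c τ i (m+1) + f τ m)

/-- The configurations equivalent to `c_{jm} f_m b_{jm}^K`. -/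
inductive R (τ : Type) : ℕ → Fin 4 → ℕ → (V τ →₀ ℕ) → Prop
  | fin (m j K) : R τ m j K (c τ j m + f τ m + K • b τ j m)
  | start (m j K) : R τ m j (K + en m) (c τ j m + s τ m + K • b τ j m)
  | q1 (m j K a d B x) : a + d + 1 = en m → B + en m * en m = K + en m * d → R τ m 0 (a+1) x →
      R τ (m+1) j K (c τ j (m+1) + q τ 0 (m+1) + B • b τ j (m+1) + d • b τ 3 m + x)
  | q2 (m j K a d B k r x) : a + d + 1 = en m → k + r = en m →
      B + en m * en m = K + en m * d + k → R τ m 1 r x →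
      R τ (m+1) j K (c τ j (m+1) + q τ 1 (m+1) + B • b τ j (m+1) + a • b τ 0 m + d • b τ 3 m
        + k • b τ 2 m + x)
  | q3 (m j K a d B k r x) : a + d + 1 = en m → k + r = en m →
      B + en m * en m = K + en m * d + k → R τ m 2 k x →
      R τ (m+1) j K (c τ j (m+1) + q τ 2 (m+1) + B • b τ j (m+1) + a • b τ 0 m + d • b τ 3 m
        + r • b τ 1 m + x)
  | q4 (m j K a d B x) : a + d + 1 = en m → B + en m * en m = K + en m * (d+1) →
      R τ m 3 (d+1) x →
      R τ (m+1) j K (c τ j (m+1) + q τ 3 (m+1) + B • b τ j (m+1) + a • b τ 0 m + x)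

theorem en_succ (m : ℕ) : en (m+1) = en m * en m := by
  simp only [en, pow_succ, pow_mul]; ring

theorem R_lev {m j K t} (h : R τ m j K t) (y : V τ) (hy : m < lev y) : t y = 0 := by
  induction h with
  | fin m j K => cases y <;> simp_all [lev, s_apply, f_apply, q_apply, c_apply, b_apply] <;> omega
  | start m j K => cases y <;> simp_all [lev, s_apply, f_apply, q_apply, c_apply, b_apply] <;> omega
  | q1 m j K a d B x _ _ _ ih =>
    have := ih (by omega)
    cases y <;> simp_all [lev, s_apply, f_apply, q_apply, c_apply, b_apply] <;> omega
  | q2 m j K a d B k r x _ _ _ _ ih =>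
    have := ih (by omega)
    cases y <;> simp_all [lev, s_apply, f_apply, q_apply, c_apply, b_apply] <;> omega
  | q3 m j K a d B k r x _ _ _ _ ih =>
    have := ih (by omega)
    cases y <;> simp_all [lev, s_apply, f_apply, q_apply, c_apply, b_apply] <;> omega
  | q4 m j K a d B x _ _ _ ih =>
    have := ih (by omega)
    cases y <;> simp_all [lev, s_apply, f_apply, q_apply, c_apply, b_apply] <;> omega

theorem R_C {m j K t} (h : R τ m j K t) (i : Fin 4) (hi : t (V.C i m) ≠ 0) : i = j := by
  by_contra hne
  apply hi
  have hne' : ¬ j = i := fun h => hne h.symm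
  cases h with
  | fin => simp [f_apply, c_apply, b_apply, hne']
  | start => simp [s_apply, f_apply, c_apply, b_apply, hne']
  | q1 m j K a d B x _ _ h =>
    simp [q_apply, c_apply, b_apply, hne', R_lev h (V.C i (m+1)) (by simp [lev])]
  | q2 m j K a d B k r x _ _ _ h =>
    simp [q_apply, c_apply, b_apply, hne', R_lev h (V.C i (m+1)) (by simp [lev])]
  | q3 m j K a d B k r x _ _ _ h =>
    simp [q_apply, c_apply, b_apply, hne', R_lev h (V.C i (m+1)) (by simp [lev])]
  | q4 m j K a d B x _ _ h =>
    simp [q_apply, c_apply, b_apply, hne', R_lev h (V.C i (m+1)) (by simp [lev])]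

theorem R_S {m j K t} (h : R τ m j K t) (hi : t (V.S m) ≠ 0) :
    ∃ K', K = K' + en m ∧ t = c τ j m + s τ m + K' • b τ j m := by
  cases h with
  | fin => simp [f_apply, c_apply, b_apply] at hi
  | start => exact ⟨_, rfl, rfl⟩
  | q1 m j K a d B x _ _ h =>
    simp [q_apply, c_apply, b_apply, R_lev h (V.S (m+1)) (by simp [lev])] at hi
  | q2 m j K a d B k r x _ _ _ h =>
    simp [q_apply, c_apply, b_apply, R_lev h (V.S (m+1)) (by simp [lev])] at hi
  | q3 m j K a d B k r x _ _ _ h =>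
    simp [q_apply, c_apply, b_apply, R_lev h (V.S (m+1)) (by simp [lev])] at hi
  | q4 m j K a d B x _ _ h =>
    simp [q_apply, c_apply, b_apply, R_lev h (V.S (m+1)) (by simp [lev])] at hi

theorem R_F {m j K t} (h : R τ m j K t) (hi : t (V.F m) ≠ 0) :
    t = c τ j m + f τ m + K • b τ j m := by
  cases h with
  | fin => rfl
  | start => simp [s_apply, c_apply, b_apply] at hi
  | q1 m j K a d B x _ _ h =>
    simp [q_apply, c_apply, b_apply, R_lev h (V.F (m+1)) (by simp [lev])] at hi
  | q2 m j K a d B k r x _ _ _ h =>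
    simp [q_apply, c_apply, b_apply, R_lev h (V.F (m+1)) (by simp [lev])] at hi
  | q3 m j K a d B k r x _ _ _ h =>
    simp [q_apply, c_apply, b_apply, R_lev h (V.F (m+1)) (by simp [lev])] at hi
  | q4 m j K a d B x _ _ h =>
    simp [q_apply, c_apply, b_apply, R_lev h (V.F (m+1)) (by simp [lev])] at hi

theorem R_Q0 {m j K t} (h : R τ (m+1) j K t) (hi : t (V.Q 0 (m+1)) ≠ 0) :
    ∃ a d B x, a + d + 1 = en m ∧ B + en m * en m = K + en m * d ∧ R τ m 0 (a+1) x ∧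
      t = c τ j (m+1) + q τ 0 (m+1) + B • b τ j (m+1) + d • b τ 3 m + x := by
  cases h with
  | fin => simp [f_apply, c_apply, b_apply] at hi
  | start => simp [s_apply, c_apply, b_apply] at hi
  | q1 _ _ _ a d B x h1 h2 h => exact ⟨a, d, B, x, h1, h2, h, rfl⟩
  | q2 _ _ _ a d B k r x _ _ _ h =>
    simp [q_apply, c_apply, b_apply, R_lev h (V.Q 0 (m+1)) (by simp [lev])] at hi
  | q3 _ _ _ a d B k r x _ _ _ h =>
    simp [q_apply, c_apply, b_apply, R_lev h (V.Q 0 (m+1)) (by simp [lev])] at hi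
  | q4 _ _ _ a d B x _ _ h =>
    simp [q_apply, c_apply, b_apply, R_lev h (V.Q 0 (m+1)) (by simp [lev])] at hi

theorem R_Q1 {m j K t} (h : R τ (m+1) j K t) (hi : t (V.Q 1 (m+1)) ≠ 0) :
    ∃ a d B k r x, a + d + 1 = en m ∧ k + r = en m ∧ B + en m * en m = K + en m * d + k ∧
      R τ m 1 r x ∧
      t = c τ j (m+1) + q τ 1 (m+1) + B • b τ j (m+1) + a • b τ 0 m + d • b τ 3 m
        + k • b τ 2 m + x := by
  cases h with
  | fin => simp [f_apply, c_apply, b_apply] at hi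
  | start => simp [s_apply, c_apply, b_apply] at hi
  | q1 _ _ _ a d B x h1 h2 h =>
    simp [q_apply, c_apply, b_apply, R_lev h (V.Q 1 (m+1)) (by simp [lev])] at hi
  | q2 _ _ _ a d B k r x h1 h2 h3 h => exact ⟨a, d, B, k, r, x, h1, h2, h3, h, rfl⟩
  | q3 _ _ _ a d B k r x _ _ _ h =>
    simp [q_apply, c_apply, b_apply, R_lev h (V.Q 1 (m+1)) (by simp [lev])] at hi
  | q4 _ _ _ a d B x _ _ h =>
    simp [q_apply, c_apply, b_apply, R_lev h (V.Q 1 (m+1)) (by simp [lev])] at hi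

theorem R_Q2 {m j K t} (h : R τ (m+1) j K t) (hi : t (V.Q 2 (m+1)) ≠ 0) :
    ∃ a d B k r x, a + d + 1 = en m ∧ k + r = en m ∧ B + en m * en m = K + en m * d + k ∧
      R τ m 2 k x ∧
      t = c τ j (m+1) + q τ 2 (m+1) + B • b τ j (m+1) + a • b τ 0 m + d • b τ 3 m
        + r • b τ 1 m + x := by
  cases h with
  | fin => simp [f_apply, c_apply, b_apply] at hi
  | start => simp [s_apply, c_apply, b_apply] at hi
  | q1 _ _ _ a d B x h1 h2 h =>
    simp [q_apply, c_apply, b_apply, R_lev h (V.Q 2 (m+1)) (by simp [lev])] at hi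
  | q2 _ _ _ a d B k r x h1 h2 h3 h =>
    simp [q_apply, c_apply, b_apply, R_lev h (V.Q 2 (m+1)) (by simp [lev])] at hi
  | q3 _ _ _ a d B k r x h1 h2 h3 h => exact ⟨a, d, B, k, r, x, h1, h2, h3, h, rfl⟩
  | q4 _ _ _ a d B x _ _ h =>
    simp [q_apply, c_apply, b_apply, R_lev h (V.Q 2 (m+1)) (by simp [lev])] at hi

theorem R_Q3 {m j K t} (h : R τ (m+1) j K t) (hi : t (V.Q 3 (m+1)) ≠ 0) :
    ∃ a d B x, a + d + 1 = en m ∧ B + en m * en m = K + en m * (d+1) ∧ R τ m 3 (d+1) x ∧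
      t = c τ j (m+1) + q τ 3 (m+1) + B • b τ j (m+1) + a • b τ 0 m + x := by
  cases h with
  | fin => simp [f_apply, c_apply, b_apply] at hi
  | start => simp [s_apply, c_apply, b_apply] at hi
  | q1 _ _ _ a d B x h1 h2 h =>
    simp [q_apply, c_apply, b_apply, R_lev h (V.Q 3 (m+1)) (by simp [lev])] at hi
  | q2 _ _ _ a d B k r x _ _ _ h =>
    simp [q_apply, c_apply, b_apply, R_lev h (V.Q 3 (m+1)) (by simp [lev])] at hi
  | q3 _ _ _ a d B k r x _ _ _ h =>
    simp [q_apply, c_apply, b_apply, R_lev h (V.Q 3 (m+1)) (by simp [lev])] at hi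
  | q4 _ _ _ a d B x h1 h2 h => exact ⟨a, d, B, x, h1, h2, h, rfl⟩

/-- A move in either direction. -/
def St (τ : Type) (l : ℕ) (u v : V τ →₀ ℕ) : Prop := Mv τ l u v ∨ Mv τ l v u

theorem St_lev {l u v} (h : St τ l u v) (y : V τ) (hy : l < lev y) : u y = 0 := by
  rcases h with h | h <;> cases h <;> cases y <;>
    simp_all [lev, s_apply, f_apply, q_apply, c_apply, b_apply] <;> omega

theorem St_B {l u v} (h : St τ l u v) (m : ℕ) (hm : l ≤ m) (i : Fin 4)
    (hi : u (V.B i m) ≠ 0) : u (V.C i m) ≠ 0 := by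
  rcases h with h | h <;> cases h <;>
    simp_all [lev, s_apply, f_apply, q_apply, c_apply, b_apply] <;> omega

theorem St_SF {l u v} (h : St τ l u v) : ∃ k ≤ l, u (V.S k) ≠ 0 ∨ u (V.F k) ≠ 0 := by
  rcases h with h | h <;> cases h
  case inl.zero => exact ⟨0, le_rfl, by simp [f_apply]⟩
  case inr.zero => exact ⟨0, le_rfl, by simp [s_apply]⟩
  case inr.p1 m => exact ⟨m+1, le_rfl, by simp [s_apply]⟩
  case inr.p6 m => exact ⟨m+1, le_rfl, by simp [f_apply]⟩
  all_goals
    rename_i m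
    first
    | exact ⟨m, Nat.le_succ _, by simp [s_apply, f_apply]⟩
    | skip
  all_goals exact ⟨_, Nat.le_succ _, by simp [s_apply, f_apply]⟩

theorem swap {c₀ u v E E' : V τ →₀ ℕ} (h : c₀ + u = E) (h' : E + v = E' + u) : c₀ + v = E' := by
  apply add_right_cancel (b := u)
  rw [← h', ← h]; abel

theorem lift {m l i K x u v ctx c₀} (hx : R τ m i K x) (hs : St τ l u v) (hl : l ≤ m)
    (hctx : ∀ y, ctx y ≠ 0 → m < lev y ∨ ∃ i', i' ≠ i ∧ y = V.B i' m)
    (h : c₀ + u = ctx + x)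
    (ih : ∀ c₁, c₁ + u = x → R τ m i K (c₁ + v)) :
    ∃ x', R τ m i K x' ∧ c₀ + v = ctx + x' := by
  have hle : u ≤ x := by
    intro y
    have hy := DFunLike.congr_fun h y
    simp only [Finsupp.add_apply] at hy
    by_cases h0 : ctx y = 0
    · omega
    rcases hctx y h0 with h1 | ⟨i', hi', rfl⟩
    · rw [St_lev hs y (by omega)]; omega
    · by_cases hu : u (V.B i' m) = 0
      · omega
      have hc := St_B hs m hl i' hu
      exfalso
      have hy := DFunLike.congr_fun h (V.C i' m)
      simp only [Finsupp.add_apply] at hy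
      have h2 : ctx (V.C i' m) = 0 := by
        by_contra h3
        rcases hctx _ h3 with h4 | ⟨_, _, h4⟩
        · simp [lev] at h4
        · cases h4
      exact hi' (R_C hx i' (by omega))
  obtain ⟨c₁, rfl⟩ := exists_add_of_le hle
  refine ⟨c₁ + v, ih c₁ (add_comm _ _), ?_⟩
  apply swap h
  abel

theorem closed0 {j K t} (ht : R τ 0 j K t) {u v c₀} (hs : St τ 0 u v) (h : c₀ + u = t) :
    R τ 0 j K (c₀ + v) := by
  have he : en 0 = 2 := by simp [en]
  rcases hs with hs | hs
  · cases hs with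
    | zero i =>
      have hij : i = j := R_C ht i (by rw [← h]; simp [c_apply])
      subst hij
      have ht' := R_F ht (by rw [← h]; simp [f_apply])
      rw [ht'] at h
      have hk := DFunLike.congr_fun h (V.B i 0)
      simp [s_apply, f_apply, c_apply, b_apply] at hk
      obtain ⟨K', rfl⟩ : ∃ K', K = K' + en 0 := ⟨K - 2, by omega⟩
      rw [swap h (E' := c τ i 0 + s τ 0 + K' • b τ i 0) (by rw [he]; module)]
      exact R.start _ _ _
  · cases hs with
    | zero i =>
      have hij : i = j := R_C ht i (by rw [← h]; simp [c_apply])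
      subst hij
      obtain ⟨K', rfl, ht'⟩ := R_S ht (by rw [← h]; simp [s_apply])
      rw [ht'] at h
      rw [swap h (E' := c τ i 0 + f τ 0 + (K' + en 0) • b τ i 0) (by rw [he]; module)]
      exact R.fin _ _ _

theorem closed_low {m j K t} (ht : R τ (m+1) j K t) {l u v c₀} (hs : St τ l u v) (hl : l ≤ m)
    (h : c₀ + u = t)
    (ih : ∀ i K x c₁, R τ m i K x → c₁ + u = x → R τ m i K (c₁ + v)) :
    R τ (m+1) j K (c₀ + v) := by
  obtain ⟨k, hk, hk'⟩ := St_SF hs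
  have hk2 : t (V.S k) ≠ 0 ∨ t (V.F k) ≠ 0 := by
    rw [← h]; simp only [Finsupp.add_apply]; omega
  cases ht with
  | fin =>
    simp [f_apply, c_apply, b_apply] at hk2; omega
  | start =>
    simp [s_apply, c_apply, b_apply] at hk2; omega
  | q1 _ _ _ a d B x h1 h2 hx =>
    obtain ⟨x', hx', h3⟩ := lift hx hs hl (by
      intro y hy
      clear h hk2
      cases y <;> simp [q_apply, c_apply, b_apply] at hy <;> simp [lev] <;> omega) h (fun c₁ hc => ih _ _ _ _ hx hc)
    rw [h3]
    exact R.q1 _ _ _ a d B x' h1 h2 hx'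
  | q2 _ _ _ a d B k r x h1 h2 h3 hx =>
    obtain ⟨x', hx', h4⟩ := lift hx hs hl (by
      intro y hy
      clear h hk2
      cases y <;> simp [q_apply, c_apply, b_apply] at hy <;> simp [lev] <;> omega) h (fun c₁ hc => ih _ _ _ _ hx hc)
    rw [h4]
    exact R.q2 _ _ _ a d B k r x' h1 h2 h3 hx'
  | q3 _ _ _ a d B k r x h1 h2 h3 hx =>
    obtain ⟨x', hx', h4⟩ := lift hx hs hl (by
      intro y hy
      clear h hk2
      cases y <;> simp [q_apply, c_apply, b_apply] at hy <;> simp [lev] <;> omega) h (fun c₁ hc => ih _ _ _ _ hx hc)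
    rw [h4]
    exact R.q3 _ _ _ a d B k r x' h1 h2 h3 hx'
  | q4 _ _ _ a d B x h1 h2 hx =>
    obtain ⟨x', hx', h3⟩ := lift hx hs hl (by
      intro y hy
      clear h hk2
      cases y <;> simp [q_apply, c_apply, b_apply] at hy <;> simp [lev] <;> omega) h (fun c₁ hc => ih _ _ _ _ hx hc)
    rw [h3]
    exact R.q4 _ _ _ a d B x' h1 h2 hx'

/-! Explicit forms of configurations containing a given `q` and `s_m` or `f_m`. -/

theorem R_Q0S {m j K t} (h : R τ (m+1) j K t) (hi : t (V.Q 0 (m+1)) ≠ 0) (hs : t (V.S m) ≠ 0) :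
    ∃ B, K = B + en (m+1) ∧
      t = c τ j (m+1) + q τ 0 (m+1) + B • b τ j (m+1) + (c τ 0 m + s τ m) := by
  obtain ⟨a, d, B, x, h1, h2, hx, rfl⟩ := R_Q0 h hi
  simp [q_apply, c_apply, b_apply] at hs
  obtain ⟨K', h3, rfl⟩ := R_S hx hs
  obtain rfl : d = 0 := by omega
  obtain rfl : K' = 0 := by omega
  exact ⟨B, by rw [en_succ]; omega, by module⟩

theorem R_Q0F {m j K t} (h : R τ (m+1) j K t) (hi : t (V.Q 0 (m+1)) ≠ 0) (hs : t (V.F m) ≠ 0) :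
    ∃ a d B, a + d + 1 = en m ∧ B + en m * en m = K + en m * d ∧
      t = c τ j (m+1) + q τ 0 (m+1) + B • b τ j (m+1) + d • b τ 3 m
        + (c τ 0 m + f τ m + (a+1) • b τ 0 m) := by
  obtain ⟨a, d, B, x, h1, h2, hx, rfl⟩ := R_Q0 h hi
  simp [q_apply, c_apply, b_apply] at hs
  obtain rfl := R_F hx hs
  exact ⟨a, d, B, h1, h2, rfl⟩

theorem R_Q1S {m j K t} (h : R τ (m+1) j K t) (hi : t (V.Q 1 (m+1)) ≠ 0) (hs : t (V.S m) ≠ 0) :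
    ∃ a d B, a + d + 1 = en m ∧ B + en m * en m = K + en m * d ∧
      t = c τ j (m+1) + q τ 1 (m+1) + B • b τ j (m+1) + a • b τ 0 m + d • b τ 3 m
        + (c τ 1 m + s τ m) := by
  obtain ⟨a, d, B, k, r, x, h1, h2, h3, hx, rfl⟩ := R_Q1 h hi
  simp [q_apply, c_apply, b_apply] at hs
  obtain ⟨K', h4, rfl⟩ := R_S hx hs
  obtain rfl : k = 0 := by omega
  obtain rfl : K' = 0 := by omega
  exact ⟨a, d, B, h1, h3, by module⟩

theorem R_Q1F {m j K t} (h : R τ (m+1) j K t) (hi : t (V.Q 1 (m+1)) ≠ 0) (hs : t (V.F m) ≠ 0) :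
    ∃ a d B k r, a + d + 1 = en m ∧ k + r = en m ∧ B + en m * en m = K + en m * d + k ∧
      t = c τ j (m+1) + q τ 1 (m+1) + B • b τ j (m+1) + a • b τ 0 m + d • b τ 3 m
        + k • b τ 2 m + (c τ 1 m + f τ m + r • b τ 1 m) := by
  obtain ⟨a, d, B, k, r, x, h1, h2, h3, hx, rfl⟩ := R_Q1 h hi
  simp [q_apply, c_apply, b_apply] at hs
  obtain rfl := R_F hx hs
  exact ⟨a, d, B, k, r, h1, h2, h3, rfl⟩

theorem R_Q2S {m j K t} (h : R τ (m+1) j K t) (hi : t (V.Q 2 (m+1)) ≠ 0) (hs : t (V.S m) ≠ 0) :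
    ∃ a d B, a + d + 1 = en m ∧ B + en m * en m = K + en m * (d+1) ∧
      t = c τ j (m+1) + q τ 2 (m+1) + B • b τ j (m+1) + a • b τ 0 m + d • b τ 3 m
        + (c τ 2 m + s τ m) := by
  obtain ⟨a, d, B, k, r, x, h1, h2, h3, hx, rfl⟩ := R_Q2 h hi
  simp [q_apply, c_apply, b_apply] at hs
  obtain ⟨K', h4, rfl⟩ := R_S hx hs
  obtain rfl : r = 0 := by omega
  obtain rfl : K' = 0 := by omega
  exact ⟨a, d, B, h1, by rw [mul_add]; omega, by module⟩

theorem R_Q2F {m j K t} (h : R τ (m+1) j K t) (hi : t (V.Q 2 (m+1)) ≠ 0) (hs : t (V.F m) ≠ 0) :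
    ∃ a d B k r, a + d + 1 = en m ∧ k + r = en m ∧ B + en m * en m = K + en m * d + k ∧
      t = c τ j (m+1) + q τ 2 (m+1) + B • b τ j (m+1) + a • b τ 0 m + d • b τ 3 m
        + r • b τ 1 m + (c τ 2 m + f τ m + k • b τ 2 m) := by
  obtain ⟨a, d, B, k, r, x, h1, h2, h3, hx, rfl⟩ := R_Q2 h hi
  simp [q_apply, c_apply, b_apply] at hs
  obtain rfl := R_F hx hs
  exact ⟨a, d, B, k, r, h1, h2, h3, rfl⟩

theorem R_Q3S {m j K t} (h : R τ (m+1) j K t) (hi : t (V.Q 3 (m+1)) ≠ 0) (hs : t (V.S m) ≠ 0) :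
    t = c τ j (m+1) + q τ 3 (m+1) + K • b τ j (m+1) + (c τ 3 m + s τ m) := by
  obtain ⟨a, d, B, x, h1, h2, hx, rfl⟩ := R_Q3 h hi
  simp [q_apply, c_apply, b_apply] at hs
  obtain ⟨K', h3, rfl⟩ := R_S hx hs
  obtain rfl : a = 0 := by omega
  obtain rfl : K' = 0 := by omega
  rw [h3, zero_add] at h2
  obtain rfl : B = K := by omega
  module

theorem R_Q3F {m j K t} (h : R τ (m+1) j K t) (hi : t (V.Q 3 (m+1)) ≠ 0) (hs : t (V.F m) ≠ 0) :
    ∃ a d B, a + d + 1 = en m ∧ B + en m * en m = K + en m * (d+1) ∧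
      t = c τ j (m+1) + q τ 3 (m+1) + B • b τ j (m+1) + a • b τ 0 m
        + (c τ 3 m + f τ m + (d+1) • b τ 3 m) := by
  obtain ⟨a, d, B, x, h1, h2, hx, rfl⟩ := R_Q3 h hi
  simp [q_apply, c_apply, b_apply] at hs
  obtain rfl := R_F hx hs
  exact ⟨a, d, B, h1, h2, rfl⟩

theorem start0 (m j) : R τ m j (en m) (c τ j m + s τ m) := by
  have := R.start (τ := τ) m j 0
  simpa using this

theorem en_pos (m : ℕ) : 0 < en m := by simp [en]

/-- Moves of the top level, left to right. -/
theorem closed_top1 {m j K t} (ht : R τ (m+1) j K t) {u v c₀} (hs : Mv τ (m+1) u v)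
    (h : c₀ + u = t) : R τ (m+1) j K (c₀ + v) := by
  have hpos := en_pos m
  cases hs with
  | p1 =>
    obtain ⟨B, rfl, rfl⟩ := R_Q0S ht (by rw [← h]; simp [q_apply]) (by rw [← h]; simp [s_apply])
    rw [swap h (E' := c τ j (m+1) + s τ (m+1) + B • b τ j (m+1)) (by module)]
    exact R.start _ _ _
  | p2 =>
    obtain ⟨a, d, B, h1, h2, rfl⟩ :=
      R_Q1S ht (by rw [← h]; simp [q_apply]) (by rw [← h]; simp [s_apply])
    rw [swap h (E' := c τ j (m+1) + q τ 0 (m+1) + B • b τ j (m+1) + d • b τ 3 m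
      + (c τ 0 m + f τ m + (a+1) • b τ 0 m)) (by module)]
    exact R.q1 _ _ _ a d B _ h1 h2 (R.fin _ _ _)
  | p3 =>
    obtain ⟨a, d, B, k, r, h1, h2, h3, rfl⟩ :=
      R_Q2F ht (by rw [← h]; simp [q_apply]) (by rw [← h]; simp [f_apply])
    rw [swap h (E' := c τ j (m+1) + q τ 1 (m+1) + B • b τ j (m+1) + a • b τ 0 m + d • b τ 3 m
      + k • b τ 2 m + (c τ 1 m + f τ m + r • b τ 1 m)) (by module)]
    exact R.q2 _ _ _ a d B k r _ h1 h2 h3 (R.fin _ _ _)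
  | p4 =>
    obtain ⟨a, d, B, h1, h2, rfl⟩ :=
      R_Q2S ht (by rw [← h]; simp [q_apply]) (by rw [← h]; simp [s_apply])
    have hk := DFunLike.congr_fun h (V.B 0 m)
    simp [s_apply, q_apply, c_apply, b_apply] at hk
    obtain ⟨a', rfl⟩ : ∃ a', a = a' + 1 := ⟨a - 1, by omega⟩
    rw [swap h (E' := c τ j (m+1) + q τ 1 (m+1) + B • b τ j (m+1) + a' • b τ 0 m
      + (d+1) • b τ 3 m + 0 • b τ 2 m + (c τ 1 m + s τ m)) (by module)]
    exact R.q2 _ _ _ a' (d+1) B 0 (en m) _ (by omega) (by omega) (by omega) (start0 _ _)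
  | p5 =>
    obtain ⟨a, d, B, h1, h2, rfl⟩ :=
      R_Q3F ht (by rw [← h]; simp [q_apply]) (by rw [← h]; simp [f_apply])
    rw [swap h (E' := c τ j (m+1) + q τ 2 (m+1) + B • b τ j (m+1) + a • b τ 0 m
      + d • b τ 3 m + 0 • b τ 1 m + (c τ 2 m + s τ m)) (by module)]
    exact R.q3 _ _ _ a d B (en m) 0 _ (by omega) (by omega) (by rw [mul_add] at h2; omega)
      (start0 _ _)
  | p6 =>
    have h1 := R_Q3S ht (by rw [← h]; simp [q_apply]) (by rw [← h]; simp [s_apply])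
    rw [h1] at h
    rw [swap h (E' := c τ j (m+1) + f τ (m+1) + K • b τ j (m+1)) (by module)]
    exact R.fin _ _ _
  | p7 _ i =>
    have hij : i = j := R_C ht i (by rw [← h]; simp [c_apply])
    subst hij
    obtain ⟨a, d, B, k, r, h1, h2, h3, rfl⟩ :=
      R_Q1F ht (by rw [← h]; simp [q_apply]) (by rw [← h]; simp [f_apply])
    have hk := DFunLike.congr_fun h (V.B 2 m)
    simp [f_apply, q_apply, c_apply, b_apply] at hk
    have hB := DFunLike.congr_fun h (V.B i (m+1))
    simp [f_apply, q_apply, c_apply, b_apply] at hB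
    obtain ⟨k', rfl⟩ : ∃ k', k = k' + 1 := ⟨k - 1, by omega⟩
    obtain ⟨B', rfl⟩ : ∃ B', B = B' + 1 := ⟨B - 1, by omega⟩
    rw [swap h (E' := c τ i (m+1) + q τ 1 (m+1) + B' • b τ i (m+1) + a • b τ 0 m + d • b τ 3 m
      + k' • b τ 2 m + (c τ 1 m + f τ m + (r+1) • b τ 1 m)) (by module)]
    exact R.q2 _ _ _ a d B' k' (r+1) _ h1 (by omega) (by omega) (R.fin _ _ _)

/-- Moves of the top level, right to left. -/
theorem closed_top2 {m j K t} (ht : R τ (m+1) j K t) {u v c₀} (hs : Mv τ (m+1) v u)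
    (h : c₀ + u = t) : R τ (m+1) j K (c₀ + v) := by
  have hpos := en_pos m
  cases hs with
  | p1 =>
    obtain ⟨B, rfl, rfl⟩ := R_S ht (by rw [← h]; simp [s_apply])
    rw [swap h (E' := c τ j (m+1) + q τ 0 (m+1) + B • b τ j (m+1) + 0 • b τ 3 m
      + (c τ 0 m + s τ m)) (by module)]
    obtain ⟨a, ha⟩ : ∃ a, en m = a + 1 := ⟨en m - 1, by omega⟩
    exact R.q1 _ _ _ a 0 B _ (by omega) (by rw [en_succ]; omega) (ha ▸ start0 _ _)
  | p2 =>
    obtain ⟨a, d, B, h1, h2, rfl⟩ :=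
      R_Q0F ht (by rw [← h]; simp [q_apply]) (by rw [← h]; simp [f_apply])
    rw [swap h (E' := c τ j (m+1) + q τ 1 (m+1) + B • b τ j (m+1) + a • b τ 0 m
      + d • b τ 3 m + 0 • b τ 2 m + (c τ 1 m + s τ m)) (by module)]
    exact R.q2 _ _ _ a d B 0 (en m) _ h1 (by omega) h2 (start0 _ _)
  | p3 =>
    obtain ⟨a, d, B, k, r, h1, h2, h3, rfl⟩ :=
      R_Q1F ht (by rw [← h]; simp [q_apply]) (by rw [← h]; simp [f_apply])
    rw [swap h (E' := c τ j (m+1) + q τ 2 (m+1) + B • b τ j (m+1) + a • b τ 0 m + d • b τ 3 m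
      + r • b τ 1 m + (c τ 2 m + f τ m + k • b τ 2 m)) (by module)]
    exact R.q3 _ _ _ a d B k r _ h1 h2 h3 (R.fin _ _ _)
  | p4 =>
    obtain ⟨a, d, B, h1, h2, rfl⟩ :=
      R_Q1S ht (by rw [← h]; simp [q_apply]) (by rw [← h]; simp [s_apply])
    have hk := DFunLike.congr_fun h (V.B 3 m)
    simp [s_apply, q_apply, c_apply, b_apply] at hk
    obtain ⟨d', rfl⟩ : ∃ d', d = d' + 1 := ⟨d - 1, by omega⟩
    rw [swap h (E' := c τ j (m+1) + q τ 2 (m+1) + B • b τ j (m+1) + (a+1) • b τ 0 m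
      + d' • b τ 3 m + 0 • b τ 1 m + (c τ 2 m + s τ m)) (by module)]
    exact R.q3 _ _ _ (a+1) d' B (en m) 0 _ (by omega) (by omega) (by rw [mul_add] at h2; omega)
      (start0 _ _)
  | p5 =>
    obtain ⟨a, d, B, h1, h2, rfl⟩ :=
      R_Q2S ht (by rw [← h]; simp [q_apply]) (by rw [← h]; simp [s_apply])
    rw [swap h (E' := c τ j (m+1) + q τ 3 (m+1) + B • b τ j (m+1) + a • b τ 0 m
      + (c τ 3 m + f τ m + (d+1) • b τ 3 m)) (by module)]
    exact R.q4 _ _ _ a d B _ h1 h2 (R.fin _ _ _)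
  | p6 =>
    have h1 := R_F ht (by rw [← h]; simp [f_apply])
    rw [h1] at h
    rw [swap h (E' := c τ j (m+1) + q τ 3 (m+1) + K • b τ j (m+1) + 0 • b τ 0 m
      + (c τ 3 m + s τ m)) (by module)]
    obtain ⟨d, hd⟩ : ∃ d, en m = d + 1 := ⟨en m - 1, by omega⟩
    exact R.q4 _ _ _ 0 d K _ (by omega) (by rw [← hd]) (hd ▸ start0 _ _)
  | p7 _ i =>
    have hij : i = j := R_C ht i (by rw [← h]; simp [c_apply])
    subst hij
    obtain ⟨a, d, B, k, r, h1, h2, h3, rfl⟩ :=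
      R_Q1F ht (by rw [← h]; simp [q_apply]) (by rw [← h]; simp [f_apply])
    have hk := DFunLike.congr_fun h (V.B 1 m)
    simp [f_apply, q_apply, c_apply, b_apply] at hk
    obtain ⟨r', rfl⟩ : ∃ r', r = r' + 1 := ⟨r - 1, by omega⟩
    rw [swap h (E' := c τ i (m+1) + q τ 1 (m+1) + (B+1) • b τ i (m+1) + a • b τ 0 m
      + d • b τ 3 m + (k+1) • b τ 2 m + (c τ 1 m + f τ m + r' • b τ 1 m)) (by module)]
    exact R.q2 _ _ _ a d (B+1) (k+1) r' _ h1 (by omega) (by omega) (R.fin _ _ _)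

theorem closed (m : ℕ) : ∀ {j K t}, R τ m j K t → ∀ {l u v c₀}, l ≤ m → St τ l u v →
    c₀ + u = t → R τ m j K (c₀ + v) := by
  induction m with
  | zero =>
    intro j K t ht l u v c₀ hl hs h
    obtain rfl : l = 0 := by omega
    exact closed0 ht hs h
  | succ m ih =>
    intro j K t ht l u v c₀ hl hs h
    rcases Nat.lt_or_ge m l with hl' | hl'
    · obtain rfl : l = m + 1 := by omega
      rcases hs with hs | hs
      · exact closed_top1 ht hs h
      · exact closed_top2 ht hs h
    · exact closed_low ht hs hl' h (fun i K x c₁ hx hc => ih hx hl' hs hc)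

/-- The embedding of the variables. -/
def emb (n : ℕ) : MVar n → V (MVar n)
  | .vS false i => V.S i
  | .vF false i => V.F i
  | .vQ false j i => V.Q j i
  | .vC false j i => V.C j i
  | .vB false j i => V.B j i
  | x => V.O x

/-- A left inverse of `emb`. -/
def unemb (n : ℕ) : V (MVar n) → MVar n
  | .O x => x
  | .S i => .vS false (Fin.ofNat (n+1) i)
  | .F i => .vF false (Fin.ofNat (n+1) i)
  | .Q j i => .vQ false j (Fin.ofNat (n+1) i)
  | .C j i => .vC false j (Fin.ofNat (n+1) i)
  | .B j i => .vB false j (Fin.ofNat (n+1) i)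

theorem emb_inj (n : ℕ) : Function.Injective (emb n) := by
  apply Function.LeftInverse.injective (g := unemb n)
  intro x
  rcases x with _ | _ | _ | _ | _ | _ | ⟨_ | _, i⟩ | ⟨_ | _, i⟩ | ⟨_ | _, j, i⟩ | ⟨_ | _, j, i⟩ |
    ⟨_ | _, j, i⟩ <;> simp [emb, unemb]

/-- A set of monomials closed under the moves gives a functional vanishing on the ideal. -/
theorem mem_of_closed {σ : Type*} (P : Set (MvPolynomial σ (ZMod 2))) (T : Set (σ →₀ ℕ))
    (hP : ∀ p ∈ P, ∃ u v, p = monomial u 1 + monomial v 1 ∧ ∀ w, w + u ∈ T ↔ w + v ∈ T)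
    (u v : σ →₀ ℕ) (h : (monomial u 1 + monomial v 1 : MvPolynomial σ (ZMod 2)) ∈ Ideal.span P)
    (hu : u ∈ T) : v ∈ T := by
  classical
  let L : MvPolynomial σ (ZMod 2) →ₗ[ZMod 2] ZMod 2 :=
    (MvPolynomial.basisMonomials σ (ZMod 2)).constr (ZMod 2) (fun t => if t ∈ T then 1 else 0)
  have hL : ∀ t, L (monomial t 1) = if t ∈ T then 1 else 0 := by
    intro t
    have := (MvPolynomial.basisMonomials σ (ZMod 2)).constr_basis (ZMod 2)
      (fun t => if t ∈ T then (1 : ZMod 2) else 0) t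
    simpa [L] using this
  have h2 : (1 : ZMod 2) + 1 = 0 := by decide
  have key : ∀ p ∈ Ideal.span P, ∀ a, L (a * p) = 0 := by
    intro p hp
    induction hp using Submodule.span_induction with
    | mem p hp =>
      intro a
      obtain ⟨u, v, rfl, hw⟩ := hP p hp
      induction a using MvPolynomial.induction_on' with
      | monomial w r =>
        have hr : (monomial w r : MvPolynomial σ (ZMod 2)) = r • monomial w 1 := by
          rw [smul_monomial]; simp
        rw [hr, smul_mul_assoc, map_smul, mul_add, monomial_mul, monomial_mul, map_add, mul_one,
          hL, hL]
        by_cases hv : w + v ∈ T <;> simp [hw, hv, h2]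
      | add p q hp hq => rw [add_mul, map_add, hp, hq, add_zero]
    | zero => simp
    | add x y _ _ hx hy => intro a; rw [mul_add, map_add, hx, hy, add_zero]
    | smul b x _ hx => intro a; rw [smul_eq_mul, ← mul_assoc]; exact hx _
  have h3 := key _ h 1
  rw [one_mul] at h3
  rw [map_add, hL, hL, if_pos hu] at h3
  by_contra hv
  rw [if_neg hv] at h3
  simp at h3

/-- The pull-back of `R`. -/
def T (n : ℕ) (j : Fin 4) : Set (MVar n →₀ ℕ) :=
  {t | R (MVar n) n j (en n) (Finsupp.mapDomain (emb n) t)}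

theorem T_iff {n j l u v} (hl : l ≤ n)
    (h : Mv (MVar n) l (Finsupp.mapDomain (emb n) u) (Finsupp.mapDomain (emb n) v)) (w) :
    w + u ∈ T n j ↔ w + v ∈ T n j := by
  simp only [T, Set.mem_ofPred_eq, Finsupp.mapDomain_add]
  exact ⟨fun h1 => closed n h1 hl (Or.inl h) rfl, fun h1 => closed n h1 hl (Or.inr h) rfl⟩

theorem gen {n : ℕ} (j : Fin 4) (p : MPoly n) (hp : p ∈ PP n false) :
    ∃ u v, p = monomial u 1 + monomial v 1 ∧ ∀ w, w + u ∈ T n j ↔ w + v ∈ T n j := by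
  rcases hp with ⟨i, rfl⟩ | hp
  · refine ⟨?_, ?_, ?_, T_iff (l := 0) (by omega) ?_⟩
    rotate_left 2
    · simp only [X, monomial_mul, monomial_pow, one_pow, mul_one]; rfl
    simp only [Finsupp.mapDomain_add, Finsupp.mapDomain_smul, Finsupp.mapDomain_single, emb]
    exact Mv.zero i
  · obtain ⟨i, hp⟩ := Set.mem_iUnion.1 hp
    have hi : (i : ℕ) + 1 ≤ n := i.2
    rcases hp with (rfl | rfl | rfl | rfl | rfl | rfl) | ⟨i', rfl⟩
    all_goals
      refine ⟨?_, ?_, ?_, T_iff (l := (i : ℕ) + 1) hi ?_⟩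
      rotate_left 2
      · simp only [X, monomial_mul, monomial_pow, one_pow, mul_one]; rfl
      simp only [Finsupp.mapDomain_add, Finsupp.mapDomain_single, emb, Fin.val_succ,
        Fin.val_castSucc]
    · exact Mv.p1 _
    · exact Mv.p2 _
    · exact Mv.p3 _
    · exact Mv.p4 _
    · exact Mv.p5 _
    · exact Mv.p6 _
    · exact Mv.p7 _ _

theorem main (n : ℕ) (j : Fin 4) (α : Mon (MVar n))
    (h : (X (vC false j (Fin.last n)) * X (vS false (Fin.last n)) + monomial α 1 : MPoly n)
      ∈ Ideal.span (PP n false))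
    (hf : α (vF false (Fin.last n)) ≠ 0) :
    (monomial α 1 : MPoly n)
      = X (vB false j (Fin.last n)) ^ en n * X (vC false j (Fin.last n))
          * X (vF false (Fin.last n)) := by
  have h' : (monomial (Finsupp.single (vC false j (Fin.last n)) 1
      + Finsupp.single (vS false (Fin.last n)) 1) 1 + monomial α 1 : MPoly n)
      ∈ Ideal.span (PP n false) := by
    simpa only [X, monomial_mul, mul_one] using h
  have hα := mem_of_closed _ (T n j) (gen j) _ _ h' (by
    simp only [T, Set.mem_ofPred_eq, Finsupp.mapDomain_add, Finsupp.mapDomain_single, emb,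
      Fin.val_last]
    exact start0 n j)
  have hF := R_F hα (by
    have : V.F n = emb n (vF false (Fin.last n)) := by simp [emb]
    rw [this, Finsupp.mapDomain_apply (emb_inj n)]
    exact hf)
  have : α = en n • Finsupp.single (vB false j (Fin.last n)) 1
      + Finsupp.single (vC false j (Fin.last n)) 1
      + Finsupp.single (vF false (Fin.last n)) 1 := by
    apply Finsupp.mapDomain_injective (emb_inj n)
    rw [hF]
    simp only [Finsupp.mapDomain_add, Finsupp.mapDomain_smul, Finsupp.mapDomain_single, emb,
      Fin.val_last, c, f, b]
    abel
  rw [this]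
  simp only [X, monomial_mul, monomial_pow, one_pow, mul_one]

end MM

open MVar in
/-- For `1 ≤ j ≤ 4` (encoded `j : Fin 4`) and any monomial `α` with
`c_{jn} s_n + α ∈ ⟨P⟩`, if the variable `f_n` divides `α` then
`α = b_{jn}^{2^(2^n)} c_{jn} f_n`. -/
theorem stmt10 (n : ℕ) (j : Fin 4) (α : Mon (MVar n))
    (h : (X (vC false j (Fin.last n)) * X (vS false (Fin.last n)) + monomial α 1 : MPoly n)
      ∈ Ideal.span (PP n false))
    (hf : α (vF false (Fin.last n)) ≠ 0) :
    (monomial α 1 : MPoly n)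
      = X (vB false j (Fin.last n)) ^ en n * X (vC false j (Fin.last n))
          * X (vF false (Fin.last n)) := by
  exact MM.main n j α h hf
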